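/- Let φ : [0,∞) × ℝⁿ → ℝ be a smooth solution of □_g φ - ∂_t φ = 0 such that φ(t, ·) has compact support for every t ≥ 0. Then for every multi-index I ∈ ℕⁿ and every integer I_0 ≥ 0 there exists a constant C_{I,I_0} > 0 (independent of t) such that f^{I,I_0}(t) ≤ C_{I,I_0} · Σ_{k=0}^{I_0} Σ_{multi-indices l with |l| + k ≤ |I| + I_0} f^{l,k}(0) for all t ≥ 0. -/

import Mathlib

/-!
Multiplied by `eᵗ`, the equation reads `eᵗ φₜₜ = Δφ - (n/2 + 1) eᵗ φₜ` (`IsSol`), and the weight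
in `f^{I,k}` is chosen so that `f^{I,k}(t) = ½ ∫ dens (∂ₜᵏ D^I φ)(t, x) dx`, where
`dens u = eᵗ uₜ² + |∇u|²` (`fEn_eq`).

*Spatial derivatives.* The coefficients do not depend on `x`, so `u = D^I φ` solves the same
equation (`IsSol.Dmix`). Along a solution, `d/dt ∫ dens u = -(n + 1) ∫ eᵗ uₜ² ≤ 0`, hence purely
spatial energies are nonincreasing (`integral_dens_le`).

*Time derivatives.* Differentiating the equation `k` times in `t` expresses `∂ₜ^{k+2} u` as
`e^{-t} Δ ∂ₜᵏ u` minus a combination of lower pure time derivatives (`IsSol.time_eqn`). Induction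
on `k` bounds `dens (∂ₜᵏ D^I φ)` pointwise, for `t ≥ 0`, by a constant times the sum of
`dens (D^l φ)` over `|l| ≤ |I| + k` (`dens_pT_iterate_le`); no energy identity for the
time-differentiated equation is needed. Integrating and using the monotonicity of the spatial
energies, the `k = 0` part of the right-hand side already suffices.

*Supports.* Differentiating under the integral sign and integrating by parts need supports that
are bounded locally uniformly in `t`, while only compactness at each single time is assumed. By
Baire's theorem some interval of times has a common bounded support, so at some time `t₁` the
Cauchy data `(φ, φₜ)` are compactly supported. The weighted energy inequality `weighted_le`, with
the smooth cone weights `coneW`, then gives finite speed of propagation away from `t₁` in both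
time directions (`eq_zero_of_data`), and with it the uniformity
(`locSupp_of_hasCompactSupport`).
-/

open Real MeasureTheory

/-- Time derivative ∂ₜ of a function on ℝ × ℝⁿ. -/
noncomputable def pT (n : ℕ) (φ : ℝ × (Fin n → ℝ) → ℝ) : ℝ × (Fin n → ℝ) → ℝ :=
  fun p => deriv (fun s => φ (s, p.2)) p.1

/-- Spatial derivative ∂ₓᵢ of a function on ℝ × ℝⁿ. -/
noncomputable def pX (n : ℕ) (i : Fin n) (φ : ℝ × (Fin n → ℝ) → ℝ) : ℝ × (Fin n → ℝ) → ℝ :=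
  fun p => deriv (fun s => φ (p.1, Function.update p.2 i s)) (p.2 i)

/-- Mixed spatial derivative D^I = ∂ₓ₁^{I₁} ⋯ ∂ₓₙ^{Iₙ}. -/
noncomputable def Dmix (n : ℕ) (I : Fin n → ℕ) (φ : ℝ × (Fin n → ℝ) → ℝ) : ℝ × (Fin n → ℝ) → ℝ :=
  (List.ofFn (fun i : Fin n => (pX n i)^[I i])).foldr (· ∘ ·) id φ

/-- The de Sitter wave operator □_g φ = -∂ₜ²φ - (n/2)∂ₜφ + e^{-t} Σᵢ ∂ₓᵢ²φ. -/
noncomputable def dBox (n : ℕ) (φ : ℝ × (Fin n → ℝ) → ℝ) : ℝ × (Fin n → ℝ) → ℝ :=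
  fun p => -(pT n (pT n φ) p) - ((n : ℝ) / 2) * pT n φ p
    + Real.exp (-p.1) * ∑ i : Fin n, pX n i (pX n i φ) p

/-- The de Sitter null form Q(φ,ψ) = -φₜψₜ + e^{-t} Σᵢ φᵢψᵢ. -/
noncomputable def nullQ (n : ℕ) (φ ψ : ℝ × (Fin n → ℝ) → ℝ) : ℝ × (Fin n → ℝ) → ℝ :=
  fun p => -(pT n φ p) * pT n ψ p + Real.exp (-p.1) * ∑ i : Fin n, pX n i φ p * pX n i ψ p

/-- Energy E₀^{I,I₀}(t) = (1/2)∫ (∂ₜ ∂ₜ^{I₀} D^I φ)² e^{nt/2} dx. -/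
noncomputable def En0 (n : ℕ) (φ : ℝ × (Fin n → ℝ) → ℝ) (I : Fin n → ℕ) (I0 : ℕ) (t : ℝ) : ℝ :=
  (1/2) * ∫ x : Fin n → ℝ, (pT n ((pT n)^[I0] (Dmix n I φ)) (t, x))^2 * Real.exp ((n : ℝ) * t / 2)

/-- Energy E₁^{I,I₀}(t) = (1/2)∫ e^{-t} Σᵢ (∂ₓᵢ ∂ₜ^{I₀} D^I φ)² e^{nt/2} dx. -/
noncomputable def En1 (n : ℕ) (φ : ℝ × (Fin n → ℝ) → ℝ) (I : Fin n → ℕ) (I0 : ℕ) (t : ℝ) : ℝ :=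
  (1/2) * ∫ x : Fin n → ℝ, Real.exp (-t) *
    (∑ i : Fin n, (pX n i ((pT n)^[I0] (Dmix n I φ)) (t, x))^2) * Real.exp ((n : ℝ) * t / 2)

/-- Weighted energy f^{I,I₀}(t) = e^{(2-n)t/2} (E₀^{I,I₀}(t) + E₁^{I,I₀}(t)). -/
noncomputable def fEn (n : ℕ) (φ : ℝ × (Fin n → ℝ) → ℝ) (I : Fin n → ℕ) (I0 : ℕ) (t : ℝ) : ℝ :=
  Real.exp (((2 : ℝ) - n) * t / 2) * (En0 n φ I I0 t + En1 n φ I I0 t)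

/-! ### Coordinate derivatives as directional derivatives -/

section Calculus

variable {n : ℕ} {g h : ℝ × (Fin n → ℝ) → ℝ}

lemma hasDerivAt_pT (hg : ContDiff ℝ (⊤ : ℕ∞) g) (p : ℝ × (Fin n → ℝ)) :
    HasDerivAt (fun s => g (s, p.2)) (pT n g p) p.1 := by
  have hd : Differentiable ℝ g := hg.differentiable (by simp)
  have : DifferentiableAt ℝ (fun s => g (s, p.2)) p.1 := by fun_prop
  exact this.hasDerivAt

lemma hasDerivAt_pX (hg : ContDiff ℝ (⊤ : ℕ∞) g) (i : Fin n) (p : ℝ × (Fin n → ℝ)) :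
    HasDerivAt (fun s => g (p.1, Function.update p.2 i s)) (pX n i g p) (p.2 i) := by
  have hd : Differentiable ℝ g := hg.differentiable (by simp)
  have hu : DifferentiableAt ℝ (fun s => Function.update p.2 i s) (p.2 i) :=
    (hasDerivAt_update p.2 i (p.2 i)).differentiableAt
  have : DifferentiableAt ℝ (fun s => g (p.1, Function.update p.2 i s)) (p.2 i) :=
    (hd _).comp (p.2 i) ((differentiableAt_const _).prodMk hu)
  exact this.hasDerivAt

lemma pT_eq_fderiv (hg : ContDiff ℝ (⊤ : ℕ∞) g) :
    pT n g = fun p => fderiv ℝ g p ((1, 0) : ℝ × (Fin n → ℝ)) := by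
  have hd : Differentiable ℝ g := hg.differentiable (by simp)
  funext p
  have h1 : HasDerivAt (fun s : ℝ => (s, p.2)) ((1, 0) : ℝ × (Fin n → ℝ)) p.1 :=
    (hasDerivAt_id p.1).prodMk (hasDerivAt_const _ _)
  exact ((hd p).hasFDerivAt.comp_hasDerivAt p.1 h1).deriv

lemma pX_eq_fderiv (hg : ContDiff ℝ (⊤ : ℕ∞) g) (i : Fin n) :
    pX n i g = fun p => fderiv ℝ g p ((0, Pi.single i 1) : ℝ × (Fin n → ℝ)) := by
  have hd : Differentiable ℝ g := hg.differentiable (by simp)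
  funext p
  have h1 : HasDerivAt (fun s : ℝ => (p.1, Function.update p.2 i s))
      ((0, Pi.single i 1) : ℝ × (Fin n → ℝ)) (p.2 i) :=
    (hasDerivAt_const _ _).prodMk (hasDerivAt_update p.2 i (p.2 i))
  have h2 : HasFDerivAt g (fderiv ℝ g p) (p.1, Function.update p.2 i (p.2 i)) := by
    rw [Function.update_eq_self]; exact (hd p).hasFDerivAt
  exact (h2.comp_hasDerivAt (p.2 i) h1).deriv

lemma contDiff_fderiv_dir (hg : ContDiff ℝ (⊤ : ℕ∞) g) (v : ℝ × (Fin n → ℝ)) :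
    ContDiff ℝ (⊤ : ℕ∞) (fun p => fderiv ℝ g p v) :=
  (hg.fderiv_right (m := (⊤ : ℕ∞)) (by simp)).clm_apply contDiff_const

lemma contDiff_pT (hg : ContDiff ℝ (⊤ : ℕ∞) g) : ContDiff ℝ (⊤ : ℕ∞) (pT n g) := by
  rw [pT_eq_fderiv hg]; exact contDiff_fderiv_dir hg _

lemma contDiff_pX (hg : ContDiff ℝ (⊤ : ℕ∞) g) (i : Fin n) :
    ContDiff ℝ (⊤ : ℕ∞) (pX n i g) := by
  rw [pX_eq_fderiv hg]; exact contDiff_fderiv_dir hg _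

lemma fderiv_dir_comm (hg : ContDiff ℝ (⊤ : ℕ∞) g) (v w p : ℝ × (Fin n → ℝ)) :
    fderiv ℝ (fun q => fderiv ℝ g q v) p w = fderiv ℝ (fun q => fderiv ℝ g q w) p v := by
  have hd : DifferentiableAt ℝ (fderiv ℝ g) p :=
    ((hg.fderiv_right (m := (⊤ : ℕ∞)) (by simp)).differentiable (by simp)) p
  have hs : IsSymmSndFDerivAt ℝ g p := hg.contDiffAt.isSymmSndFDerivAt (by simp; norm_cast)
  rw [fderiv_clm_apply hd (differentiableAt_const v),
    fderiv_clm_apply hd (differentiableAt_const w)]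
  simpa using hs.eq w v

lemma pX_pT_comm (hg : ContDiff ℝ (⊤ : ℕ∞) g) (i : Fin n) :
    pX n i (pT n g) = pT n (pX n i g) := by
  rw [pX_eq_fderiv (contDiff_pT hg), pT_eq_fderiv (contDiff_pX hg i), pT_eq_fderiv hg,
    pX_eq_fderiv hg]
  funext p; exact fderiv_dir_comm hg _ _ _

lemma pX_pX_comm (hg : ContDiff ℝ (⊤ : ℕ∞) g) (i j : Fin n) :
    pX n i (pX n j g) = pX n j (pX n i g) := by
  rw [pX_eq_fderiv (contDiff_pX hg j), pX_eq_fderiv (contDiff_pX hg i), pX_eq_fderiv hg,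
    pX_eq_fderiv hg]
  funext p; exact fderiv_dir_comm hg _ _ _

lemma contDiff_pT_iterate (hg : ContDiff ℝ (⊤ : ℕ∞) g) (k : ℕ) :
    ContDiff ℝ (⊤ : ℕ∞) ((pT n)^[k] g) := by
  induction k with
  | zero => exact hg
  | succ k ih => rw [Function.iterate_succ_apply']; exact contDiff_pT ih

lemma pX_pT_iterate_comm (hg : ContDiff ℝ (⊤ : ℕ∞) g) (i : Fin n) (k : ℕ) :
    pX n i ((pT n)^[k] g) = (pT n)^[k] (pX n i g) := by
  induction k with
  | zero => rfl
  | succ k ih =>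
    rw [Function.iterate_succ_apply', Function.iterate_succ_apply',
      pX_pT_comm (contDiff_pT_iterate hg k), ih]

lemma contDiff_pX_iterate (hg : ContDiff ℝ (⊤ : ℕ∞) g) (j : Fin n) (k : ℕ) :
    ContDiff ℝ (⊤ : ℕ∞) ((pX n j)^[k] g) := by
  induction k with
  | zero => exact hg
  | succ k ih => rw [Function.iterate_succ_apply']; exact contDiff_pX ih j

lemma pX_pX_iterate_comm (hg : ContDiff ℝ (⊤ : ℕ∞) g) (i j : Fin n) (k : ℕ) :
    pX n i ((pX n j)^[k] g) = (pX n j)^[k] (pX n i g) := by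
  induction k with
  | zero => rfl
  | succ k ih =>
    rw [Function.iterate_succ_apply', Function.iterate_succ_apply',
      pX_pX_comm (contDiff_pX_iterate hg j k), ih]

/-- Vanishing on a slab over an open set passes to the coordinate derivatives; at the end points
of the time interval one-sided derivatives determine the two-sided ones. -/
lemma pT_eq_zero (hg : ContDiff ℝ (⊤ : ℕ∞) g) {a b : ℝ} (hab : a < b) {U : Set (Fin n → ℝ)}
    (h0 : ∀ t ∈ Set.Icc a b, ∀ x ∈ U, g (t, x) = 0) :
    ∀ t ∈ Set.Icc a b, ∀ x ∈ U, pT n g (t, x) = 0 := by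
  intro t ht x hx
  have h1 := (hasDerivAt_pT hg (t, x)).hasDerivWithinAt (s := Set.Icc a b)
  have h2 : HasDerivWithinAt (fun s => g (s, x)) 0 (Set.Icc a b) t :=
    (hasDerivWithinAt_const t _ (0 : ℝ)).congr (fun s hs => h0 s hs x hx) (h0 t ht x hx)
  exact (uniqueDiffOn_Icc hab t ht).eq_deriv _ h1 h2

lemma pX_eq_zero (i : Fin n) {U : Set (Fin n → ℝ)} (hU : IsOpen U) {t c : ℝ}
    (h0 : ∀ x ∈ U, g (t, x) = c) : ∀ x ∈ U, pX n i g (t, x) = 0 := by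
  intro x hx
  have hc : Continuous (fun s : ℝ => Function.update x i s) :=
    continuous_const.update i continuous_id
  have hm : ∀ᶠ s in nhds (x i), Function.update x i s ∈ U :=
    hc.continuousAt.eventually (hU.mem_nhds (by simpa using hx))
  have : (fun s => g (t, Function.update x i s)) =ᶠ[nhds (x i)] fun _ => c := by
    filter_upwards [hm] with s hs using h0 _ hs
  simp only [pX]
  rw [this.deriv_eq]; simp

end Calculus

/-! ### Local uniform spatial support -/

section Support

variable {n : ℕ} {g h : ℝ × (Fin n → ℝ) → ℝ} {A : Set ℝ}

/-- The supports of `u (t, ·)` are uniformly bounded for `t` in each interval `[a, b]` with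
`a ∈ A`. Used with `A = univ` for weights and `A = {0}` for solutions on `[0, ∞)`. -/
def LocSupp (n : ℕ) (A : Set ℝ) (u : ℝ × (Fin n → ℝ) → ℝ) : Prop :=
  ∀ a ∈ A, ∀ b, ∃ R : ℝ, ∀ t ∈ Set.Icc a b, ∀ x : Fin n → ℝ, R < ‖x‖ → u (t, x) = 0

lemma LocSupp.pX (hs : LocSupp n A g) (i : Fin n) : LocSupp n A (pX n i g) := by
  intro a ha b
  obtain ⟨R, hR⟩ := hs a ha b
  exact ⟨R, fun t ht x hx => pX_eq_zero i (U := {x | R < ‖x‖})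
    (isOpen_lt continuous_const continuous_norm) (hR t ht) x hx⟩

lemma LocSupp.pT (hg : ContDiff ℝ (⊤ : ℕ∞) g) (hs : LocSupp n A g) :
    LocSupp n A (pT n g) := by
  intro a ha b
  obtain ⟨R, hR⟩ := hs a ha (max b (a + 1))
  exact ⟨R, fun t ht x hx => pT_eq_zero hg (U := {x | R < ‖x‖})
    (lt_of_lt_of_le (lt_add_one a) (le_max_right b _)) hR t
    ⟨ht.1, ht.2.trans (le_max_left _ _)⟩ x hx⟩

lemma LocSupp.pT_iterate (hg : ContDiff ℝ (⊤ : ℕ∞) g) (hs : LocSupp n A g) (k : ℕ) :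
    LocSupp n A ((_root_.pT n)^[k] g) := by
  induction k with
  | zero => exact hs
  | succ k ih => rw [Function.iterate_succ_apply']; exact ih.pT (contDiff_pT_iterate hg k)

lemma LocSupp.mul_right (hs : LocSupp n A g) : LocSupp n A (fun p => g p * h p) := by
  intro a ha b
  obtain ⟨R, hR⟩ := hs a ha b
  exact ⟨R, fun t ht x hx => by simp [hR t ht x hx]⟩

lemma LocSupp.integrable (hs : LocSupp n A g) (hg : Continuous g) {a t : ℝ} (ha : a ∈ A)
    (hat : a ≤ t) : Integrable (fun x => g (t, x)) := by
  obtain ⟨R, hR⟩ := hs a ha t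
  refine Continuous.integrable_of_hasCompactSupport (by fun_prop) ?_
  refine HasCompactSupport.of_support_subset_isCompact (isCompact_closedBall (0 : Fin n → ℝ) R) ?_
  intro x hx
  by_contra hx'
  exact hx (hR t ⟨hat, le_rfl⟩ x (by simpa using hx'))

/-- A spatial derivative of a compactly supported function integrates to zero. -/
lemma integral_pX_eq_zero (hs : LocSupp n Set.univ g) (hg : ContDiff ℝ (⊤ : ℕ∞) g) (i : Fin n)
    (t : ℝ) : ∫ x, pX n i g (t, x) = 0 := by
  have hd : Differentiable ℝ g := hg.differentiable (by simp)
  have hx : ∀ x, pX n i g (t, x) = fderiv ℝ (fun y => g (t, y)) x (Pi.single i 1) := by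
    intro x
    have h1 : HasFDerivAt (fun y : Fin n → ℝ => (t, y))
        ((0 : (Fin n → ℝ) →L[ℝ] ℝ).prod (ContinuousLinearMap.id ℝ (Fin n → ℝ))) x :=
      (hasFDerivAt_const t x).prodMk (hasFDerivAt_id x)
    have h2 := (hd (t, x)).hasFDerivAt.comp x h1
    have h3 := h2.fderiv
    simp only [Function.comp_def] at h3
    rw [h3, pX_eq_fderiv hg]
    simp
  have key := integral_mul_fderiv_eq_neg_fderiv_mul_of_integrable (𝕜 := ℝ) (μ := volume)
    (f := fun _ : Fin n → ℝ => (1 : ℝ)) (g := fun y => g (t, y)) (v := Pi.single i 1)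
    (by simp) (by
      simp only [one_mul, ← hx]
      exact (hs.pX i).integrable (contDiff_pX hg i).continuous (Set.mem_univ t) le_rfl)
    (by simpa using hs.integrable hg.continuous (Set.mem_univ t) le_rfl)
    (by intro x _; exact differentiableAt_const _) (by intro x _; fun_prop)
  simp only [hx]
  simpa using key

/-- Differentiation under the integral sign. -/
lemma hasDerivAt_integral_locSupp (hs : LocSupp n Set.univ g) (hg : ContDiff ℝ (⊤ : ℕ∞) g)
    (t : ℝ) : HasDerivAt (fun s => ∫ x, g (s, x)) (∫ x, pT n g (t, x)) t := by
  obtain ⟨R, hR⟩ := hs.pT hg (t - 1) (Set.mem_univ _) (t + 1)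
  have hc : Continuous (pT n g) := (contDiff_pT hg).continuous
  have hK : IsCompact (Set.Icc (t - 1) (t + 1) ×ˢ Metric.closedBall (0 : Fin n → ℝ) R) :=
    isCompact_Icc.prod (isCompact_closedBall _ _)
  obtain ⟨M, hM⟩ := hK.exists_bound_of_continuousOn hc.continuousOn
  refine (hasDerivAt_integral_of_dominated_loc_of_deriv_le
    (s := Set.Icc (t - 1) (t + 1)) (F := fun s x => g (s, x)) (F' := fun s x => pT n g (s, x))
    (bound := (Metric.closedBall (0 : Fin n → ℝ) R).indicator fun _ => M)
    (Icc_mem_nhds (by linarith) (by linarith)) ?_ ?_ ?_ ?_ ?_ ?_).2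
  · exact Filter.Eventually.of_forall fun s =>
      (hg.continuous.comp (by fun_prop : Continuous fun x : Fin n → ℝ => (s, x))).aestronglyMeasurable
  · exact hs.integrable hg.continuous (Set.mem_univ t) le_rfl
  · exact (hc.comp (by fun_prop : Continuous fun x : Fin n → ℝ => (t, x))).aestronglyMeasurable
  · refine Filter.Eventually.of_forall fun x s hsm => ?_
    by_cases hx : x ∈ Metric.closedBall (0 : Fin n → ℝ) R
    · rw [Set.indicator_of_mem hx]; exact hM (s, x) ⟨hsm, hx⟩
    · rw [Set.indicator_of_notMem hx, hR s hsm x (by simpa using hx)]; simp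
  · exact (integrable_indicator_iff measurableSet_closedBall).2
      (integrableOn_const (isCompact_closedBall _ _).measure_lt_top.ne)
  · exact Filter.Eventually.of_forall fun x s _ => hasDerivAt_pT hg (s, x)

end Support

/-! ### The weighted energy identity -/

section Energy

variable {n : ℕ} {u w : ℝ × (Fin n → ℝ) → ℝ}

/-- The energy density `eᵗ uₜ² + |∇u|²`, normalised so that `fEn` is half its integral. -/
noncomputable def dens (n : ℕ) (u : ℝ × (Fin n → ℝ) → ℝ) : ℝ × (Fin n → ℝ) → ℝ :=
  fun p => Real.exp p.1 * (pT n u p) ^ 2 + ∑ i : Fin n, (pX n i u p) ^ 2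

/-- Smooth solutions, for `t ≥ 0`, of `eᵗ uₜₜ = Δu - (n/2 + 1) eᵗ uₜ`, which is
`□_g u - uₜ = 0` multiplied by `-eᵗ`. -/
structure IsSol (n : ℕ) (u : ℝ × (Fin n → ℝ) → ℝ) : Prop where
  smooth : ContDiff ℝ (⊤ : ℕ∞) u
  eqn : ∀ p : ℝ × (Fin n → ℝ), 0 ≤ p.1 →
    Real.exp p.1 * pT n (pT n u) p
      = ∑ i, pX n i (pX n i u) p - ((n : ℝ) / 2 + 1) * (Real.exp p.1 * pT n u p)

/-- For a solution `u`, the time derivative of `w * dens u` up to a spatial divergence. -/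
noncomputable def wflux (n : ℕ) (w u : ℝ × (Fin n → ℝ) → ℝ) : ℝ × (Fin n → ℝ) → ℝ :=
  fun p => pT n w p * dens n u p - ((n : ℝ) + 1) * w p * (Real.exp p.1 * (pT n u p) ^ 2)
    - 2 * pT n u p * ∑ i, pX n i w p * pX n i u p

lemma dens_nonneg (p : ℝ × (Fin n → ℝ)) : 0 ≤ dens n u p := by
  unfold dens; positivity

lemma contDiff_dens (hu : ContDiff ℝ (⊤ : ℕ∞) u) : ContDiff ℝ (⊤ : ℕ∞) (dens n u) := by
  have h1 := contDiff_pT hu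
  have h2 := fun i => contDiff_pX hu i
  unfold dens
  fun_prop

lemma LocSupp.dens {A : Set ℝ} (hu : ContDiff ℝ (⊤ : ℕ∞) u) (hs : LocSupp n A u) :
    LocSupp n A (dens n u) := by
  intro a ha b
  obtain ⟨R, hR⟩ := hs.pT hu a ha b
  have hX := fun i => hs.pX i a ha b
  choose S hS using hX
  have hsum : 0 ≤ ∑ i, |S i| := Finset.sum_nonneg fun i _ => abs_nonneg (S i)
  refine ⟨|R| + ∑ i, |S i|, fun t ht x hx => ?_⟩
  have h1 : _root_.pT n u (t, x) = 0 := hR t ht x (by linarith [le_abs_self R])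
  have h2 : ∀ i, _root_.pX n i u (t, x) = 0 := fun i => hS i t ht x (by
    linarith [le_abs_self (S i), abs_nonneg R,
      Finset.single_le_sum (fun i _ => abs_nonneg (S i)) (Finset.mem_univ i)])
  simp [_root_.dens, h1, h2]

lemma pT_mul_dens (hu : IsSol n u) (hw : ContDiff ℝ (⊤ : ℕ∞) w) {p : ℝ × (Fin n → ℝ)}
    (hp : 0 ≤ p.1) :
    pT n (fun q => w q * dens n u q) p
      = wflux n w u p + 2 * ∑ i, pX n i (fun q => w q * pT n u q * pX n i u q) p := by
  have hs := hu.smooth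
  have h1 := contDiff_pT hs
  have hT : pT n (fun q => w q * dens n u q) p = _ :=
    ((hasDerivAt_pT hw p).mul (((Real.hasDerivAt_exp p.1).mul ((hasDerivAt_pT h1 p).pow 2)).add
      (HasDerivAt.fun_sum fun i (_ : i ∈ Finset.univ) =>
        (hasDerivAt_pT (contDiff_pX hs i) p).pow 2))).deriv
  have hX : ∀ i, pX n i (fun q => w q * pT n u q * pX n i u q) p
      = pX n i w p * pT n u p * pX n i u p + w p * pT n (pX n i u) p * pX n i u p
        + w p * pT n u p * pX n i (pX n i u) p := by
    intro i
    have h := (((hasDerivAt_pX hw i p).mul (hasDerivAt_pX h1 i p)).mul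
      (hasDerivAt_pX (contDiff_pX hs i) i p)).deriv
    simp only [Function.update_eq_self, Prod.mk.eta, Pi.mul_apply, pX_pT_comm hs i] at h
    refine h.trans ?_
    ring
  simp only [hT, hX, Finset.sum_add_distrib]
  have e1 : ∑ i, pX n i w p * pT n u p * pX n i u p
      = pT n u p * ∑ i, pX n i w p * pX n i u p := by
    rw [Finset.mul_sum]; exact Finset.sum_congr rfl fun i _ => by ring
  have e2 : ∑ i, w p * pT n (pX n i u) p * pX n i u p
      = w p * ∑ i, pT n (pX n i u) p * pX n i u p := by
    rw [Finset.mul_sum]; exact Finset.sum_congr rfl fun i _ => by ring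
  have e3 : ∑ i, w p * pT n u p * pX n i (pX n i u) p
      = w p * pT n u p * ∑ i, pX n i (pX n i u) p := by
    rw [Finset.mul_sum]
  have e4 : ∑ i, pX n i (pX n i u) p = Real.exp p.1 * pT n (pT n u) p
      + ((n : ℝ) / 2 + 1) * (Real.exp p.1 * pT n u p) := by
    rw [hu.eqn p hp]; ring
  have e5 : ∑ i, 2 * pX n i u p * pT n (pX n i u) p
      = 2 * ∑ i, pT n (pX n i u) p * pX n i u p := by
    rw [Finset.mul_sum]; exact Finset.sum_congr rfl fun i _ => by ring
  rw [e1, e2, e3, e4]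
  simp only [wflux, dens, Pi.add_apply, Pi.mul_apply, Pi.pow_apply]
  norm_num [e5]
  ring

lemma hasDerivAt_weighted (hu : IsSol n u) (hw : ContDiff ℝ (⊤ : ℕ∞) w)
    (hws : LocSupp n Set.univ w) {t : ℝ} (ht : 0 ≤ t) :
    HasDerivAt (fun s => ∫ x, w (s, x) * dens n u (s, x)) (∫ x, wflux n w u (t, x)) t := by
  have hs := hu.smooth
  have hF : ContDiff ℝ (⊤ : ℕ∞) fun q => w q * dens n u q := hw.mul (contDiff_dens hs)
  have hH : ∀ i, ContDiff ℝ (⊤ : ℕ∞) fun q => w q * pT n u q * pX n i u q := fun i =>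
    (hw.mul (contDiff_pT hs)).mul (contDiff_pX hs i)
  have hFs : LocSupp n Set.univ fun q => w q * dens n u q := hws.mul_right
  have hHs : ∀ i, LocSupp n Set.univ fun q => w q * pT n u q * pX n i u q := fun i =>
    hws.mul_right.mul_right
  have hI := fun i => ((hHs i).pX i).integrable (contDiff_pX (hH i) i).continuous
    (Set.mem_univ t) le_rfl
  have key : ∫ x, wflux n w u (t, x) = ∫ x, pT n (fun q => w q * dens n u q) (t, x) := by
    have e : ∀ x, wflux n w u (t, x) = pT n (fun q => w q * dens n u q) (t, x)
        - 2 * ∑ i, pX n i (fun q => w q * pT n u q * pX n i u q) (t, x) := fun x => by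
      rw [pT_mul_dens hu hw ht]; ring
    simp only [e]
    rw [integral_sub ((hFs.pT hF).integrable (contDiff_pT hF).continuous (Set.mem_univ t) le_rfl)
      ((integrable_finsetSum _ fun i _ => hI i).const_mul 2), integral_const_mul,
      integral_finsetSum _ fun i _ => hI i]
    simp [integral_pX_eq_zero (hHs _) (hH _)]
  rw [key]
  exact hasDerivAt_integral_locSupp hFs hF t

/-- With a weight whose flux has the sign of `-σ`, the weighted energy does not increase when
time runs from `t₁` in the direction `σ`. -/
lemma weighted_le (hu : IsSol n u) (hw : ContDiff ℝ (⊤ : ℕ∞) w)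
    (hws : LocSupp n Set.univ w) {t₁ σ r : ℝ} (hr : 0 ≤ r)
    (hpos : ∀ s ∈ Set.Icc 0 r, 0 ≤ t₁ + σ * s)
    (hsign : ∀ s ∈ Set.Icc 0 r, ∀ x, σ * wflux n w u (t₁ + σ * s, x) ≤ 0) :
    ∫ x, w (t₁ + σ * r, x) * dens n u (t₁ + σ * r, x)
      ≤ ∫ x, w (t₁, x) * dens n u (t₁, x) := by
  have hd : ∀ s ∈ Set.Icc 0 r, HasDerivAt
      (fun s => ∫ x, w (t₁ + σ * s, x) * dens n u (t₁ + σ * s, x))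
      ((∫ x, wflux n w u (t₁ + σ * s, x)) * σ) s := by
    intro s hs
    have h1 : HasDerivAt (fun s => t₁ + σ * s) σ s := by
      simpa using ((hasDerivAt_id s).const_mul σ).const_add t₁
    exact HasDerivAt.comp s (hasDerivAt_weighted hu hw hws (hpos s hs)) h1
  have hanti := antitoneOn_of_deriv_nonpos (convex_Icc 0 r)
    (fun s hs => (hd s hs).continuousAt.continuousWithinAt)
    (fun s hs => (hd s (interior_subset hs)).differentiableAt.differentiableWithinAt)
    (fun s hs => by
      rw [(hd s (interior_subset hs)).deriv, mul_comm, ← integral_const_mul]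
      exact integral_nonpos fun x => hsign s (interior_subset hs) x)
  simpa using hanti (Set.left_mem_Icc.2 hr) (Set.right_mem_Icc.2 hr) hr

end Energy

/-! ### Finite speed of propagation -/

section Propagation

variable {n : ℕ} {u : ℝ × (Fin n → ℝ) → ℝ}

/-- Weight supported in the cone with base the Euclidean ball of radius `ρ` about `x₀` at time
`t₁`, shrinking at unit speed as time moves in the direction `σ = ± 1`. The exponential absorbs
the lower-order term of the equation when `σ = -1`. -/
noncomputable def coneW (n : ℕ) (σ t₁ ρ : ℝ) (x₀ : Fin n → ℝ) : ℝ × (Fin n → ℝ) → ℝ :=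
  fun p => Real.exp (-σ * ((n : ℝ) + 1) * p.1) *
    expNegInvGlue ((ρ - σ * (p.1 - t₁)) ^ 2 - ∑ i, (p.2 i - x₀ i) ^ 2)

lemma contDiff_coneW (σ t₁ ρ : ℝ) (x₀ : Fin n → ℝ) :
    ContDiff ℝ (⊤ : ℕ∞) (coneW n σ t₁ ρ x₀) := by
  unfold coneW
  refine ContDiff.mul (by fun_prop) (expNegInvGlue.contDiff.comp ?_)
  fun_prop

lemma coneW_nonneg (σ t₁ ρ : ℝ) (x₀ : Fin n → ℝ) (p) : 0 ≤ coneW n σ t₁ ρ x₀ p :=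
  mul_nonneg (Real.exp_pos _).le (expNegInvGlue.nonneg _)

/-- The sup norm is dominated by the Euclidean one. -/
lemma norm_sub_lt_of_sum_sq_lt {x x₀ : Fin n → ℝ} {τ : ℝ}
    (h : ∑ i, (x i - x₀ i) ^ 2 < τ ^ 2) : ‖x - x₀‖ < |τ| := by
  have hτ : 0 < |τ| := by
    have h0 : (0 : ℝ) ≤ ∑ i, (x i - x₀ i) ^ 2 := Finset.sum_nonneg fun i _ => sq_nonneg _
    refine abs_pos.2 fun h1 => ?_
    rw [h1] at h
    norm_num at h
    linarith
  refine (pi_norm_lt_iff hτ).2 fun i => ?_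
  refine sq_lt_sq.1 (lt_of_le_of_lt ?_ h)
  exact Finset.single_le_sum (f := fun i => (x i - x₀ i) ^ 2) (fun i _ => sq_nonneg _)
    (Finset.mem_univ i)

lemma norm_sub_lt_of_coneW_ne_zero {σ t₁ ρ t : ℝ} {x₀ x : Fin n → ℝ}
    (h : coneW n σ t₁ ρ x₀ (t, x) ≠ 0) : ‖x - x₀‖ < |ρ - σ * (t - t₁)| := by
  refine norm_sub_lt_of_sum_sq_lt ?_
  by_contra hle
  exact h (by
    simp only [coneW]
    rw [expNegInvGlue.zero_of_nonpos (by linarith), mul_zero])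

lemma locSupp_coneW (σ t₁ ρ : ℝ) (x₀ : Fin n → ℝ) :
    LocSupp n Set.univ (coneW n σ t₁ ρ x₀) := by
  intro a _ b
  obtain ⟨M, hM⟩ := (isCompact_Icc (a := a) (b := b)).exists_bound_of_continuousOn
    (f := fun t => ρ - σ * (t - t₁)) (by fun_prop)
  refine ⟨‖x₀‖ + M, fun t ht x hx => ?_⟩
  by_contra hne
  have h1 := norm_sub_lt_of_coneW_ne_zero hne
  have h2 := hM t ht
  rw [Real.norm_eq_abs] at h2
  linarith [norm_sub_norm_le x x₀]

lemma deriv_expNegInvGlue_nonneg (s : ℝ) : 0 ≤ deriv expNegInvGlue s :=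
  expNegInvGlue.monotone.deriv_nonneg

lemma deriv_expNegInvGlue_of_nonpos {s : ℝ} (hs : s ≤ 0) : deriv expNegInvGlue s = 0 :=
  IsLocalMin.deriv_eq_zero (Filter.Eventually.of_forall fun y => by
    rw [expNegInvGlue.zero_of_nonpos hs]; exact expNegInvGlue.nonneg y)

/-- The dominant energy condition: cones of unit coordinate speed are causal for `t ≥ 0`,
because the coordinate speed of light is `e^{-t/2} ≤ 1`. -/
lemma dens_dominates {p : ℝ × (Fin n → ℝ)} (hp : 0 ≤ p.1) {τ : ℝ} (hτ : 0 ≤ τ)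
    {y : Fin n → ℝ} (hy : ∑ i, y i ^ 2 ≤ τ ^ 2) :
    |2 * pT n u p * ∑ i, y i * pX n i u p| ≤ τ * dens n u p := by
  set B := ∑ i, pX n i u p ^ 2 with hB
  have hB0 : 0 ≤ B := Finset.sum_nonneg fun i _ => sq_nonneg _
  have hS : (∑ i, y i * pX n i u p) ^ 2 ≤ τ ^ 2 * B :=
    (Finset.sum_mul_sq_le_sq_mul_sq _ _ _).trans (mul_le_mul_of_nonneg_right hy hB0)
  have hexp : (pT n u p) ^ 2 ≤ Real.exp p.1 * (pT n u p) ^ 2 :=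
    le_mul_of_one_le_left (sq_nonneg _) (Real.one_le_exp hp)
  have h1 : |2 * pT n u p * ∑ i, y i * pX n i u p| ≤ τ * ((pT n u p) ^ 2 + B) := by
    refine abs_le_of_sq_le_sq ?_ (by positivity)
    have := mul_le_mul_of_nonneg_left hS (sq_nonneg (pT n u p))
    nlinarith [mul_nonneg (sq_nonneg τ) (sq_nonneg ((pT n u p) ^ 2 - B))]
  refine h1.trans (mul_le_mul_of_nonneg_left ?_ hτ)
  simp only [dens]
  linarith

/-- Where the cone is still open, the flux of `coneW` has the sign of `-σ`: the decay of the weight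
beats the spatial flux by `dens_dominates`, and the exponential factor beats the damping term. -/
lemma coneW_sign {σ t₁ ρ : ℝ} (hσ : σ = 1 ∨ σ = -1) {x₀ : Fin n → ℝ}
    {p : ℝ × (Fin n → ℝ)} (hp : 0 ≤ p.1) (hτ : 0 ≤ ρ - σ * (p.1 - t₁)) :
    σ * wflux n (coneW n σ t₁ ρ x₀) u p ≤ 0 := by
  set τ := ρ - σ * (p.1 - t₁) with hτd
  set q := τ ^ 2 - ∑ i, (p.2 i - x₀ i) ^ 2 with hq
  set E := Real.exp (-σ * ((n : ℝ) + 1) * p.1) with hE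
  set η := expNegInvGlue q with hη
  set η' := deriv expNegInvGlue q with hη'
  set S := ∑ i, (p.2 i - x₀ i) * pX n i u p with hS
  have hglue : HasDerivAt expNegInvGlue η' q :=
    ((expNegInvGlue.contDiff (n := 1)).differentiable (by simp) q).hasDerivAt
  have hT : pT n (coneW n σ t₁ ρ x₀) p = E * (-σ * ((n : ℝ) + 1) * η - 2 * σ * τ * η') := by
    have h1 : HasDerivAt (fun s => Real.exp (-σ * ((n : ℝ) + 1) * s))
        (E * (-σ * ((n : ℝ) + 1))) p.1 := by
      simpa [hE] using ((hasDerivAt_id p.1).const_mul (-σ * ((n : ℝ) + 1))).exp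
    have h2 : HasDerivAt (fun s => (ρ - σ * (s - t₁)) ^ 2 - ∑ i, (p.2 i - x₀ i) ^ 2)
        (-(2 * σ * τ)) p.1 := by
      have h3 := ((((((hasDerivAt_id p.1).sub_const t₁).const_mul σ).const_sub ρ).pow 2).sub_const
        (∑ i, (p.2 i - x₀ i) ^ 2))
      exact h3.congr_deriv (by simp [hτd]; ring)
    have h4 := (h1.mul (HasDerivAt.comp p.1 hglue h2)).deriv
    refine h4.trans ?_
    simp only [Function.comp_apply, ← hτd, ← hq, ← hη, ← hE]
    ring
  have hX : ∀ i, pX n i (coneW n σ t₁ ρ x₀) p = E * (-2 * η' * (p.2 i - x₀ i)) := by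
    intro i
    have h2 : HasDerivAt (fun s => τ ^ 2 - ∑ j, (Function.update p.2 i s j - x₀ j) ^ 2)
        (-(2 * (p.2 i - x₀ i))) (p.2 i) := by
      have h3 : ∀ j, HasDerivAt (fun s => (Function.update p.2 i s j - x₀ j) ^ 2)
          (2 * (p.2 j - x₀ j) * (Pi.single i (1 : ℝ) : Fin n → ℝ) j) (p.2 i) := by
        intro j
        have h4 := ((hasDerivAt_pi.1 (hasDerivAt_update p.2 i (p.2 i)) j).sub_const (x₀ j)).pow 2
        exact h4.congr_deriv (by simp)
      have h5 := (HasDerivAt.fun_sum fun j (_ : j ∈ Finset.univ) => h3 j).const_sub (τ ^ 2)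
      simpa [Pi.single_apply] using h5
    have hglue' : HasDerivAt expNegInvGlue η'
        (τ ^ 2 - ∑ j, (Function.update p.2 i (p.2 i) j - x₀ j) ^ 2) := by
      rw [Function.update_eq_self]; exact hglue
    have h4 := ((HasDerivAt.comp (p.2 i) hglue' h2).const_mul E).deriv
    refine h4.trans ?_
    ring
  have hE0 : 0 < E := Real.exp_pos _
  have hη0 : 0 ≤ η := expNegInvGlue.nonneg _
  have hη'0 : 0 ≤ η' := deriv_expNegInvGlue_nonneg _
  have hD0 := dens_nonneg (u := u) p
  have hK : Real.exp p.1 * (pT n u p) ^ 2 ≤ dens n u p := by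
    simp only [dens]
    linarith [Finset.sum_nonneg fun i (_ : i ∈ Finset.univ) => sq_nonneg (pX n i u p)]
  have hK0 : 0 ≤ Real.exp p.1 * (pT n u p) ^ 2 := by positivity
  have hmain : 0 ≤ η' * (τ * dens n u p - σ * (2 * pT n u p * S)) := by
    rcases le_or_gt q 0 with hq0 | hq0
    · rw [hη', deriv_expNegInvGlue_of_nonpos hq0, zero_mul]
    · have h := abs_le.1 (dens_dominates (u := u) hp hτ (y := fun i => p.2 i - x₀ i)
        (by linarith))
      refine mul_nonneg hη'0 ?_
      rcases hσ with h1 | h1 <;> rw [h1] <;> linarith [h.1, h.2]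
  have hsum : ∑ i, pX n i (coneW n σ t₁ ρ x₀) p * pX n i u p = E * (-2 * η' * S) := by
    rw [hS, Finset.mul_sum, Finset.mul_sum]
    exact Finset.sum_congr rfl fun i _ => by rw [hX i]; ring
  have hσ2 : σ ^ 2 = 1 := by rcases hσ with h1 | h1 <;> rw [h1] <;> norm_num
  have hform : σ * wflux n (coneW n σ t₁ ρ x₀) u p
      = -E * (((n : ℝ) + 1) * η * (dens n u p + σ * (Real.exp p.1 * (pT n u p) ^ 2))
          + 2 * (η' * (τ * dens n u p - σ * (2 * pT n u p * S)))) := by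
    have hw : coneW n σ t₁ ρ x₀ p = E * η := rfl
    simp only [wflux, hT, hsum, hw]
    linear_combination (-E * dens n u p * (((n : ℝ) + 1) * η + 2 * τ * η')) * hσ2
  rw [hform]
  have h3 : 0 ≤ dens n u p + σ * (Real.exp p.1 * (pT n u p) ^ 2) := by
    rcases hσ with h1 | h1 <;> rw [h1] <;> linarith
  have : 0 ≤ ((n : ℝ) + 1) * η * (dens n u p + σ * (Real.exp p.1 * (pT n u p) ^ 2)) := by
    positivity
  nlinarith

/-- Domain of dependence, in both time directions: data vanishing on a ball around `x₀` of radius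
larger than the elapsed time force the solution to vanish at `x₀`. -/
lemma eq_zero_of_data {σ t₁ r ρ : ℝ} (hu : IsSol n u) (hσ : σ = 1 ∨ σ = -1) (hr : 0 ≤ r)
    (hρ : r < ρ) (ht₁ : 0 ≤ t₁) (ht₀ : 0 ≤ t₁ + σ * r) {x₀ : Fin n → ℝ}
    (h0 : ∀ x, ‖x - x₀‖ < ρ → u (t₁, x) = 0) (h1 : ∀ x, ‖x - x₀‖ < ρ → pT n u (t₁, x) = 0) :
    u (t₁ + σ * r, x₀) = 0 := by
  have hs := hu.smooth
  have hσ2 : σ * σ = 1 := by rcases hσ with h1 | h1 <;> rw [h1] <;> norm_num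
  have hpos : ∀ s ∈ Set.Icc 0 r, 0 ≤ t₁ + σ * s := by
    rintro s ⟨hs0, hsr⟩
    rcases hσ with h | h <;> rw [h] at ht₀ ⊢ <;> linarith
  have hτ : ∀ s, ρ - σ * (t₁ + σ * s - t₁) = ρ - s := fun s => by
    linear_combination (-s) * hσ2
  have hUo : IsOpen {x : Fin n → ℝ | ‖x - x₀‖ < ρ} :=
    isOpen_lt (by fun_prop) continuous_const
  have hbase : ∫ x, coneW n σ t₁ ρ x₀ (t₁, x) * dens n u (t₁, x) = 0 := by
    have : ∀ x, coneW n σ t₁ ρ x₀ (t₁, x) * dens n u (t₁, x) = 0 := by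
      intro x
      by_cases hc : coneW n σ t₁ ρ x₀ (t₁, x) = 0
      · rw [hc, zero_mul]
      · have hx := norm_sub_lt_of_coneW_ne_zero hc
        rw [sub_self, mul_zero, sub_zero, abs_of_pos (by linarith)] at hx
        have h2 := fun i => pX_eq_zero i hUo h0 x hx
        simp [dens, h1 x hx, h2]
    simp [this]
  have hvel : ∀ s ∈ Set.Icc 0 r, pT n u (t₁ + σ * s, x₀) = 0 := by
    intro s hsm
    have hle := weighted_le hu (contDiff_coneW σ t₁ ρ x₀) (locSupp_coneW σ t₁ ρ x₀) hsm.1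
      (fun s' hs' => hpos s' ⟨hs'.1, hs'.2.trans hsm.2⟩)
      (fun s' hs' x => coneW_sign hσ (hpos s' ⟨hs'.1, hs'.2.trans hsm.2⟩)
        (by simp only [hτ]; linarith [hs'.2, hsm.2]))
    rw [hbase] at hle
    have hcont : ContDiff ℝ (⊤ : ℕ∞) fun p => coneW n σ t₁ ρ x₀ p * dens n u p :=
      (contDiff_coneW σ t₁ ρ x₀).mul (contDiff_dens hs)
    have hnn : ∀ x, 0 ≤ coneW n σ t₁ ρ x₀ (t₁ + σ * s, x) * dens n u (t₁ + σ * s, x) :=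
      fun x => mul_nonneg (coneW_nonneg _ _ _ _ _) (dens_nonneg _)
    have hint : Integrable fun x =>
        coneW n σ t₁ ρ x₀ (t₁ + σ * s, x) * dens n u (t₁ + σ * s, x) :=
      ((locSupp_coneW σ t₁ ρ x₀).mul_right (h := dens n u)).integrable hcont.continuous
        (Set.mem_univ _) le_rfl
    have hz := (integral_eq_zero_iff_of_nonneg hnn hint).1 (le_antisymm hle (integral_nonneg hnn))
    have hcx : Continuous fun x : Fin n → ℝ =>
        coneW n σ t₁ ρ x₀ (t₁ + σ * s, x) * dens n u (t₁ + σ * s, x) :=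
      hcont.continuous.comp (by fun_prop : Continuous fun x : Fin n → ℝ => (t₁ + σ * s, x))
    have hz' := congrFun ((hcx.ae_eq_iff_eq volume continuous_const).1 hz) x₀
    have hwpos : 0 < coneW n σ t₁ ρ x₀ (t₁ + σ * s, x₀) := by
      refine mul_pos (Real.exp_pos _) (expNegInvGlue.pos_of_pos ?_)
      simp only [hτ, sub_self]
      have : 0 < ρ - s := by linarith [hsm.2]
      simp; positivity
    have hd : dens n u (t₁ + σ * s, x₀) = 0 := by
      rcases mul_eq_zero.1 hz' with h | h
      · exact absurd h hwpos.ne'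
      · exact h
    have hsq : Real.exp (t₁ + σ * s) * pT n u (t₁ + σ * s, x₀) ^ 2 = 0 := by
      refine le_antisymm ?_ (by positivity)
      simp only [dens] at hd
      linarith [Finset.sum_nonneg fun i (_ : i ∈ Finset.univ) =>
        sq_nonneg (pX n i u (t₁ + σ * s, x₀))]
    simpa [(Real.exp_pos _).ne'] using hsq
  have hder : ∀ s, HasDerivAt (fun s => u (t₁ + σ * s, x₀))
      (pT n u (t₁ + σ * s, x₀) * σ) s := fun s => by
    have h2 : HasDerivAt (fun s => t₁ + σ * s) σ s := by
      simpa using ((hasDerivAt_id s).const_mul σ).const_add t₁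
    exact HasDerivAt.comp s (hasDerivAt_pT hs (t₁ + σ * s, x₀)) h2
  have hconst := constant_of_has_deriv_right_zero
    (fun s _ => (hder s).continuousAt.continuousWithinAt)
    (fun s hsm => by
      have := (hder s).hasDerivWithinAt (s := Set.Ici s)
      rwa [hvel s ⟨hsm.1, hsm.2.le⟩, zero_mul] at this) r ⟨hr, le_rfl⟩
  rw [hconst]
  simpa using h0 x₀ (by simpa using hr.trans_lt hρ)

/-- Spatial compactness of support at each time is automatically locally uniform in time. By
Baire, the support is uniformly bounded during some interval of times, so the solution and its
velocity are compactly supported at one time; propagation does the rest. -/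
lemma locSupp_of_hasCompactSupport (hu : IsSol n u)
    (hsupp : ∀ t : ℝ, 0 ≤ t → HasCompactSupport fun x => u (t, x)) : LocSupp n {0} u := by
  have hs := hu.smooth
  obtain ⟨t₁, N, ht₁, h0, h1⟩ : ∃ t₁ N : ℝ, 0 ≤ t₁ ∧
      (∀ x : Fin n → ℝ, N < ‖x‖ → u (t₁, x) = 0) ∧
      (∀ x : Fin n → ℝ, N < ‖x‖ → pT n u (t₁, x) = 0) := by
    -- Baire is applied on all of `ℝ`, the times `t > 0` being parametrised by `t = eˢ`.
    let f : ℕ → Set ℝ := fun N =>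
      ⋂ x : Fin n → ℝ, ⋂ _ : (N : ℝ) < ‖x‖, {s : ℝ | u (Real.exp s, x) = 0}
    have hf : ∀ N, IsClosed (f N) := fun N =>
      isClosed_iInter fun x => isClosed_iInter fun _ =>
        isClosed_eq (hs.continuous.comp (by fun_prop)) continuous_const
    have hU : ⋃ N, f N = Set.univ := by
      refine Set.eq_univ_of_forall fun s => ?_
      obtain ⟨R, hR⟩ := (hsupp (Real.exp s) (Real.exp_pos s).le).isCompact.isBounded.exists_norm_le
      obtain ⟨N, hN⟩ := exists_nat_ge R
      refine Set.mem_iUnion.2 ⟨N, Set.mem_iInter₂.2 fun x hx => ?_⟩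
      by_contra hne
      have := hR x (subset_tsupport _ hne)
      linarith
    obtain ⟨N, s, hsN⟩ := nonempty_interior_of_iUnion_of_closed hf hU
    refine ⟨Real.exp s, N, (Real.exp_pos s).le, fun x hx => ?_, fun x hx => ?_⟩
    · exact Set.mem_iInter₂.1 (interior_subset hsN) x hx
    · have hlog : ∀ᶠ t in nhds (Real.exp s), Real.log t ∈ interior (f N) :=
        (Real.continuousAt_log (Real.exp_pos s).ne').eventually
          (isOpen_interior.mem_nhds (by simpa using hsN))
      have : (fun t => u (t, x)) =ᶠ[nhds (Real.exp s)] fun _ => (0 : ℝ) := by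
        filter_upwards [hlog, lt_mem_nhds (Real.exp_pos s)] with t ht htp
        have h2 : u (Real.exp (Real.log t), x) = 0 :=
          Set.mem_iInter₂.1 (interior_subset ht) x hx
        rwa [Real.exp_log htp] at h2
      simp only [pT]
      rw [this.deriv_eq]; simp
  rintro a rfl b
  refine ⟨N + (t₁ + |b| + 1), fun t ht x hx => ?_⟩
  have hb : t ≤ |b| := ht.2.trans (le_abs_self b)
  have hfar : ∀ y : Fin n → ℝ, ‖y - x‖ < t₁ + |b| + 1 → N < ‖y‖ := fun y hy => by
    have := norm_sub_norm_le x y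
    rw [norm_sub_rev] at this
    linarith
  rcases le_total t₁ t with h | h
  · have := eq_zero_of_data (σ := 1) (r := t - t₁) (ρ := t₁ + |b| + 1) hu (Or.inl rfl)
      (by linarith) (by linarith) ht₁ (by linarith [ht.1]) (fun y hy => h0 y (hfar y hy))
      (fun y hy => h1 y (hfar y hy))
    simpa using this
  · have := eq_zero_of_data (σ := -1) (r := t₁ - t) (ρ := t₁ + |b| + 1) hu (Or.inr rfl)
      (by linarith) (by linarith [ht.1, abs_nonneg b]) ht₁ (by linarith [ht.1])
      (fun y hy => h0 y (hfar y hy)) (fun y hy => h1 y (hfar y hy))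
    simpa using this

/-- The energy of a solution is nonincreasing on `[0, ∞)`. -/
lemma integral_dens_le (hu : IsSol n u) (hsupp : LocSupp n {0} u) {t : ℝ} (ht : 0 ≤ t) :
    ∫ x, dens n u (t, x) ≤ ∫ x, dens n u (0, x) := by
  have hs := hu.smooth
  obtain ⟨R, hR⟩ := hsupp.dens hs 0 rfl t
  -- a time-independent cutoff equal to `1` where the energy density lives
  let χ : ContDiffBump (0 : Fin n → ℝ) :=
    ⟨|R| + 1, |R| + 2, by positivity, by linarith⟩
  let w : ℝ × (Fin n → ℝ) → ℝ := fun p => χ p.2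
  have hw : ContDiff ℝ (⊤ : ℕ∞) w := χ.contDiff.comp contDiff_snd
  have hone : ∀ x : Fin n → ℝ, ‖x‖ < |R| + 1 → ∀ s, w (s, x) = 1 := fun x hx s =>
    χ.one_of_mem_closedBall (by simpa using hx.le)
  have hws : LocSupp n Set.univ w := fun a _ b =>
    ⟨|R| + 2, fun s _ x hx => χ.zero_of_le_dist (by simpa using hx.le)⟩
  have hwt : ∀ p, pT n w p = 0 := fun p => by simp [pT, w]
  have hcut : ∀ s ∈ Set.Icc 0 t, ∀ x, w (s, x) * dens n u (s, x) = dens n u (s, x) := by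
    intro s hsm x
    rcases lt_or_ge ‖x‖ (|R| + 1) with h | h
    · rw [hone x h s, one_mul]
    · rw [hR s hsm x (by linarith [le_abs_self R]), mul_zero]
  have hle := weighted_le (t₁ := 0) (σ := 1) hu hw hws ht (fun s hs => by linarith [hs.1])
    (fun s hsm x => by
      simp only [one_mul, zero_add, wflux, hwt, zero_mul, zero_sub]
      have hcross : pT n u (s, x) * ∑ i, pX n i w (s, x) * pX n i u (s, x) = 0 := by
        rcases lt_or_ge ‖x‖ (|R| + 1) with h | h
        · have : ∀ i, pX n i w (s, x) = 0 := fun i =>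
            pX_eq_zero i (isOpen_lt continuous_norm continuous_const)
              (fun y hy => hone y hy s) x h
          simp [this]
        · have hd := hR s hsm x (by linarith [le_abs_self R])
          have hsq : Real.exp s * pT n u (s, x) ^ 2 = 0 := by
            refine le_antisymm ?_ (by positivity)
            simp only [dens] at hd
            linarith [Finset.sum_nonneg fun i (_ : i ∈ Finset.univ) =>
              sq_nonneg (pX n i u (s, x))]
          have : pT n u (s, x) = 0 := by simpa [(Real.exp_pos _).ne'] using hsq
          rw [this, zero_mul]
      rw [mul_assoc 2, hcross]
      have hw0 : 0 ≤ w (s, x) := χ.nonneg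
      have : 0 ≤ ((n : ℝ) + 1) * w (s, x) * (Real.exp s * pT n u (s, x) ^ 2) := by positivity
      linarith)
  simp only [one_mul, zero_add] at hle
  simpa only [hcut t ⟨ht, le_rfl⟩, hcut 0 ⟨le_rfl, ht⟩] using hle

end Propagation

/-! ### Mixed spatial derivatives of solutions -/

section Mixed

variable {n : ℕ} {g u φ : ℝ × (Fin n → ℝ) → ℝ}

/-- `Dmix` with the product over all coordinates replaced by one over a list of coordinates. -/
noncomputable def listD (n : ℕ) (I : Fin n → ℕ) (l : List (Fin n))
    (g : ℝ × (Fin n → ℝ) → ℝ) : ℝ × (Fin n → ℝ) → ℝ :=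
  (l.map (fun i : Fin n => (pX n i)^[I i])).foldr (· ∘ ·) id g

lemma Dmix_eq_listD (I : Fin n → ℕ) : Dmix n I g = listD n I (List.finRange n) g := by
  rw [Dmix, listD, List.ofFn_eq_map]

lemma listD_cons (I : Fin n → ℕ) (j : Fin n) (l : List (Fin n)) :
    listD n I (j :: l) g = (pX n j)^[I j] (listD n I l g) := rfl

lemma listD_induction {P : (ℝ × (Fin n → ℝ) → ℝ) → Prop} (hP : ∀ g i, P g → P (pX n i g))
    (hg : P g) (I : Fin n → ℕ) (l : List (Fin n)) : P (listD n I l g) := by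
  induction l with
  | nil => exact hg
  | cons j l ih =>
    rw [listD_cons]
    induction I j with
    | zero => exact ih
    | succ k ihk => rw [Function.iterate_succ_apply']; exact hP _ _ ihk

lemma Dmix_induction {P : (ℝ × (Fin n → ℝ) → ℝ) → Prop} (hP : ∀ g i, P g → P (pX n i g))
    (hg : P g) (I : Fin n → ℕ) : P (Dmix n I g) := by
  rw [Dmix_eq_listD]; exact listD_induction hP hg I _

lemma listD_congr {I J : Fin n → ℕ} {l : List (Fin n)} (h : ∀ j ∈ l, I j = J j) :
    listD n I l g = listD n J l g := by
  unfold listD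
  rw [List.map_congr_left fun j hj => by rw [h j hj]]

lemma pX_listD (hg : ContDiff ℝ (⊤ : ℕ∞) g) (I : Fin n → ℕ) (i : Fin n) {l : List (Fin n)}
    (hl : l.Nodup) (hi : i ∈ l) :
    pX n i (listD n I l g) = listD n (I + Pi.single i 1) l g := by
  induction l with
  | nil => simp at hi
  | cons j l ih =>
    rw [listD_cons, listD_cons]
    obtain ⟨hj, hl'⟩ := List.nodup_cons.1 hl
    by_cases hij : i = j
    · subst hij
      have e : listD n (I + Pi.single i 1) l g = listD n I l g := listD_congr fun j hjl => by
        have : j ≠ i := fun h => hj (h ▸ hjl)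
        simp [this]
      rw [e]
      simp [Function.iterate_succ_apply']
    · have hil : i ∈ l := by simpa [hij] using hi
      have hs : ContDiff ℝ (⊤ : ℕ∞) (listD n I l g) :=
        listD_induction (P := fun g => ContDiff ℝ (⊤ : ℕ∞) g) (fun _ i h => contDiff_pX h i) hg I l
      rw [pX_pX_iterate_comm hs, ih hl' hil]
      simp [Ne.symm hij]

lemma pX_Dmix (hg : ContDiff ℝ (⊤ : ℕ∞) g) (I : Fin n → ℕ) (i : Fin n) :
    pX n i (Dmix n I g) = Dmix n (I + Pi.single i 1) g := by
  rw [Dmix_eq_listD, Dmix_eq_listD,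
    pX_listD hg I i (List.nodup_finRange n) (List.mem_finRange i)]

lemma sum_add_single (I : Fin n → ℕ) (i : Fin n) :
    ∑ j, (I + Pi.single i 1 : Fin n → ℕ) j = (∑ j, I j) + 1 := by
  simp [Finset.sum_add_distrib]

/-- The coefficients of the equation do not depend on `x`. -/
lemma IsSol.pX (hu : IsSol n u) (i : Fin n) : IsSol n (pX n i u) := by
  have hs := hu.smooth
  have hT := contDiff_pT hs
  have hTT := contDiff_pT hT
  refine ⟨contDiff_pX hs i, fun p hp => ?_⟩
  have hz : ∀ x ∈ (Set.univ : Set (Fin n → ℝ)), (fun q : ℝ × (Fin n → ℝ) =>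
      Real.exp q.1 * pT n (pT n u) q - (∑ j, _root_.pX n j (_root_.pX n j u) q
        - ((n : ℝ) / 2 + 1) * (Real.exp q.1 * pT n u q))) (p.1, x) = 0 := fun x _ => by
    simp only [hu.eqn (p.1, x) hp, sub_self]
  have h := pX_eq_zero (g := fun q : ℝ × (Fin n → ℝ) =>
      Real.exp q.1 * pT n (pT n u) q - (∑ j, _root_.pX n j (_root_.pX n j u) q
        - ((n : ℝ) / 2 + 1) * (Real.exp q.1 * pT n u q))) (t := p.1) (c := 0)
    i isOpen_univ hz p.2 (Set.mem_univ _)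
  have h2 := (((hasDerivAt_pX hTT i p).const_mul (Real.exp p.1)).sub
    ((HasDerivAt.fun_sum fun j (_ : j ∈ Finset.univ) =>
      hasDerivAt_pX (contDiff_pX (contDiff_pX hs j) j) i p).sub
      (((hasDerivAt_pX hT i p).const_mul (Real.exp p.1)).const_mul ((n : ℝ) / 2 + 1)))).deriv
  have h3 := h2.symm.trans h
  have e : ∀ j, _root_.pX n j (_root_.pX n j (_root_.pX n i u))
      = _root_.pX n i (_root_.pX n j (_root_.pX n j u)) := fun j => by
    rw [pX_pX_comm hs j i, pX_pX_comm (contDiff_pX hs j) j i]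
  rw [← pX_pT_comm hs i, ← pX_pT_comm hT i]
  simp only [e]
  linarith

/-- Differentiating the equation `k` times in `t`: modulo lower-order pure time derivatives,
`∂ₜ^{k+2} u` is `e^{-t} Δ ∂ₜ^k u`. -/
lemma IsSol.time_eqn (hu : IsSol n u) (k : ℕ) : ∃ a : ℕ → ℝ, ∀ p : ℝ × (Fin n → ℝ), 0 ≤ p.1 →
    Real.exp p.1 * (pT n)^[k + 2] u p = ∑ i, _root_.pX n i (_root_.pX n i ((pT n)^[k] u)) p
      - Real.exp p.1 * ∑ j ∈ Finset.range (k + 1), a j * (pT n)^[j + 1] u p := by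
  have hs := hu.smooth
  have hTs := fun k => contDiff_pT_iterate hs k
  induction k with
  | zero =>
    refine ⟨fun _ => (n : ℝ) / 2 + 1, fun p hp => ?_⟩
    have := hu.eqn p hp
    simp only [zero_add, Finset.range_one, Finset.sum_singleton, Function.iterate_succ_apply',
      Function.iterate_zero, id]
    linarith
  | succ k ih =>
    obtain ⟨a, ha⟩ := ih
    refine ⟨fun j => (if j < k + 1 then a j else 1) + (if j = 0 then 0 else a (j - 1)),
      fun p hp => ?_⟩
    have hD : HasDerivAt (fun s => Real.exp s * (pT n)^[k + 2] u (s, p.2)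
        - (∑ i, _root_.pX n i (_root_.pX n i ((pT n)^[k] u)) (s, p.2)
          - Real.exp s * ∑ j ∈ Finset.range (k + 1), a j * (pT n)^[j + 1] u (s, p.2)))
        (Real.exp p.1 * (pT n)^[k + 2] u p + Real.exp p.1 * pT n ((pT n)^[k + 2] u) p
          - (∑ i, pT n (_root_.pX n i (_root_.pX n i ((pT n)^[k] u))) p
            - (Real.exp p.1 * ∑ j ∈ Finset.range (k + 1), a j * (pT n)^[j + 1] u p
              + Real.exp p.1 * ∑ j ∈ Finset.range (k + 1),
                  a j * pT n ((pT n)^[j + 1] u) p))) p.1 :=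
      ((Real.hasDerivAt_exp p.1).mul (hasDerivAt_pT (hTs (k + 2)) p)).sub
        ((HasDerivAt.fun_sum fun i (_ : i ∈ Finset.univ) =>
          hasDerivAt_pT (contDiff_pX (contDiff_pX (hTs k) i) i) p).sub
        ((Real.hasDerivAt_exp p.1).mul (HasDerivAt.fun_sum fun j (_ : j ∈ Finset.range (k + 1)) =>
          (hasDerivAt_pT (hTs (j + 1)) p).const_mul (a j))))
    have h0 : HasDerivWithinAt (fun s => Real.exp s * (pT n)^[k + 2] u (s, p.2)
        - (∑ i, _root_.pX n i (_root_.pX n i ((pT n)^[k] u)) (s, p.2)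
          - Real.exp s * ∑ j ∈ Finset.range (k + 1), a j * (pT n)^[j + 1] u (s, p.2)))
        0 (Set.Ici 0) p.1 :=
      (hasDerivWithinAt_const p.1 _ (0 : ℝ)).congr
        (fun s hs => by rw [ha (s, p.2) hs, sub_self]) (by rw [ha p hp, sub_self])
    have h := (uniqueDiffOn_Ici (0 : ℝ) p.1 hp).eq_deriv _ hD.hasDerivWithinAt h0
    have e : ∀ i, pT n (_root_.pX n i (_root_.pX n i ((pT n)^[k] u)))
        = _root_.pX n i (_root_.pX n i ((pT n)^[k + 1] u)) := fun i => by
      rw [← pX_pT_comm (contDiff_pX (hTs k) i), ← pX_pT_comm (hTs k),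
        ← Function.iterate_succ_apply' (pT n) k u]
    have hs1 : ∑ j ∈ Finset.range (k + 1 + 1),
        ((if j < k + 1 then a j else 1) + (if j = 0 then 0 else a (j - 1))) * (pT n)^[j + 1] u p
        = (∑ j ∈ Finset.range (k + 1), a j * (pT n)^[j + 1] u p) + (pT n)^[k + 2] u p
          + ∑ j ∈ Finset.range (k + 1), a j * (pT n)^[j + 2] u p := by
      simp only [add_mul, Finset.sum_add_distrib]
      congr 1
      · rw [Finset.sum_range_succ]
        congr 1
        · exact Finset.sum_congr rfl fun j hj => by rw [if_pos (Finset.mem_range.1 hj)]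
        · simp
      · rw [Finset.sum_range_succ']
        simp
    rw [hs1]
    simp only [e, ← Function.iterate_succ_apply' (pT n)] at h
    simp only [Nat.succ_eq_add_one] at h
    simp only [mul_add]
    rw [show k + 1 + 2 = k + 2 + 1 by ring]
    linarith

end Mixed

/-! ### Control by purely spatial energies -/

section Control

variable {n : ℕ} {φ f g : ℝ × (Fin n → ℝ) → ℝ} {m : ℕ}

/-- Multi-indices of order at most `m`. -/
def idx (n m : ℕ) : Finset (Fin n → ℕ) :=
  (Fintype.piFinset fun _ : Fin n => Finset.range (m + 1)).filter (fun l => ∑ i : Fin n, l i ≤ m)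

lemma mem_idx {l : Fin n → ℕ} : l ∈ idx n m ↔ ∑ i, l i ≤ m := by
  simp only [idx, Finset.mem_filter, Fintype.mem_piFinset, Finset.mem_range, and_iff_right_iff_imp]
  intro h i
  have := Finset.single_le_sum (f := l) (fun i _ => Nat.zero_le _) (Finset.mem_univ i)
  lia

/-- Total energy density of the spatial derivatives of `φ` of order at most `m`. -/
noncomputable def densSum (n : ℕ) (φ : ℝ × (Fin n → ℝ) → ℝ) (m : ℕ) : ℝ × (Fin n → ℝ) → ℝ :=
  fun p => ∑ l ∈ idx n m, dens n (Dmix n l φ) p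

lemma densSum_nonneg (p) : 0 ≤ densSum n φ m p := Finset.sum_nonneg fun _ _ => dens_nonneg p

lemma densSum_mono {m' : ℕ} (h : m ≤ m') (p) : densSum n φ m p ≤ densSum n φ m' p :=
  Finset.sum_le_sum_of_subset_of_nonneg
    (fun _ hl => mem_idx.2 ((mem_idx.1 hl).trans h)) fun _ _ _ => dens_nonneg p

lemma dens_le_densSum {I : Fin n → ℕ} (h : ∑ i, I i ≤ m) (p) :
    dens n (Dmix n I φ) p ≤ densSum n φ m p :=
  Finset.single_le_sum (f := fun l => dens n (Dmix n l φ) p) (fun _ _ => dens_nonneg p)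
    (mem_idx.2 h)

/-- `eᵗ f²` is bounded pointwise, for `t ≥ 0`, by a multiple of `densSum n φ m`. -/
def Ctl (n : ℕ) (φ : ℝ × (Fin n → ℝ) → ℝ) (m : ℕ) (f : ℝ × (Fin n → ℝ) → ℝ) : Prop :=
  ∃ C : ℝ, 0 ≤ C ∧ ∀ p : ℝ × (Fin n → ℝ), 0 ≤ p.1 → Real.exp p.1 * f p ^ 2 ≤ C * densSum n φ m p

lemma Ctl.mono {m' : ℕ} (hf : Ctl n φ m f) (h : m ≤ m') : Ctl n φ m' f := by
  obtain ⟨C, hC, hb⟩ := hf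
  exact ⟨C, hC, fun p hp => (hb p hp).trans (mul_le_mul_of_nonneg_left (densSum_mono h p) hC)⟩

lemma Ctl.congr (hf : Ctl n φ m f) (h : ∀ p : ℝ × (Fin n → ℝ), 0 ≤ p.1 → g p = f p) :
    Ctl n φ m g := by
  obtain ⟨C, hC, hb⟩ := hf
  exact ⟨C, hC, fun p hp => by rw [h p hp]; exact hb p hp⟩

lemma Ctl.add (hf : Ctl n φ m f) (hg : Ctl n φ m g) : Ctl n φ m fun p => f p + g p := by
  obtain ⟨C, hC, hb⟩ := hf
  obtain ⟨D, hD, hd⟩ := hg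
  refine ⟨2 * C + 2 * D, by positivity, fun p hp => ?_⟩
  have h1 := hb p hp
  have h2 := hd p hp
  have h3 : Real.exp p.1 * (f p + g p) ^ 2
      ≤ Real.exp p.1 * (2 * f p ^ 2 + 2 * g p ^ 2) :=
    mul_le_mul_of_nonneg_left (by nlinarith [sq_nonneg (f p - g p)]) (Real.exp_pos _).le
  linarith

lemma Ctl.const_mul (hf : Ctl n φ m f) (c : ℝ) : Ctl n φ m fun p => c * f p := by
  obtain ⟨C, hC, hb⟩ := hf
  refine ⟨c ^ 2 * C, by positivity, fun p hp => ?_⟩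
  have := mul_le_mul_of_nonneg_left (hb p hp) (sq_nonneg c)
  linarith

lemma Ctl.sum {ι : Type*} {s : Finset ι} {F : ι → ℝ × (Fin n → ℝ) → ℝ}
    (h : ∀ i ∈ s, Ctl n φ m (F i)) : Ctl n φ m fun p => ∑ i ∈ s, F i p := by
  classical
  induction s using Finset.induction_on with
  | empty =>
    exact ⟨0, le_rfl, fun p _ => by simp⟩
  | insert i s hi ih =>
    simp only [Finset.sum_insert hi]
    exact (h i (Finset.mem_insert_self i s)).add
      (ih fun j hj => h j (Finset.mem_insert_of_mem hj))

lemma IsSol.Dmix (hφ : IsSol n φ) (I : Fin n → ℕ) : IsSol n (Dmix n I φ) :=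
  Dmix_induction (fun _ i h => h.pX i) hφ I

/-- Spatial derivatives are traded for one higher spatial index and one lower time index. -/
lemma sq_pX_le_of_ctl (hφ : IsSol n φ) {k : ℕ}
    (ih : ∀ j < k, ∀ I : Fin n → ℕ, Ctl n φ ((∑ i, I i) + j) ((pT n)^[j + 1] (Dmix n I φ)))
    (I : Fin n → ℕ) (i : Fin n) : ∃ C : ℝ, 0 ≤ C ∧ ∀ p : ℝ × (Fin n → ℝ), 0 ≤ p.1 →
      pX n i ((pT n)^[k] (Dmix n I φ)) p ^ 2 ≤ C * densSum n φ ((∑ i, I i) + k) p := by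
  cases k with
  | zero =>
    refine ⟨1, zero_le_one, fun p hp => ?_⟩
    rw [one_mul]
    refine le_trans ?_ (dens_le_densSum le_rfl p)
    have h1 : 0 ≤ Real.exp p.1 * pT n (Dmix n I φ) p ^ 2 := by positivity
    have h2 := Finset.single_le_sum (f := fun i => pX n i (Dmix n I φ) p ^ 2)
      (fun _ _ => sq_nonneg _) (Finset.mem_univ i)
    simp only [dens, Function.iterate_zero, id]
    linarith
  | succ k =>
    obtain ⟨C, hC, hb⟩ := ih k (Nat.lt_succ_self k) (I + Pi.single i 1)
    refine ⟨C, hC, fun p hp => ?_⟩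
    have h := hb p hp
    rw [sum_add_single] at h
    rw [pX_pT_iterate_comm (hφ.Dmix I).smooth, pX_Dmix hφ.smooth,
      show (∑ i, I i) + (k + 1) = (∑ i, I i) + 1 + k by ring]
    exact (le_mul_of_one_le_left (sq_nonneg _) (Real.one_le_exp hp)).trans h

lemma ctl_pT_iterate (hφ : IsSol n φ) (k : ℕ) :
    ∀ I : Fin n → ℕ, Ctl n φ ((∑ i, I i) + k) ((pT n)^[k + 1] (Dmix n I φ)) := by
  induction k using Nat.strong_induction_on with
  | _ k ih =>
  intro I
  cases k with
  | zero =>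
    refine ⟨1, zero_le_one, fun p hp => ?_⟩
    rw [one_mul]
    refine le_trans ?_ (dens_le_densSum le_rfl p)
    simp only [dens, zero_add, Function.iterate_one]
    linarith [Finset.sum_nonneg fun i (_ : i ∈ Finset.univ) =>
      sq_nonneg (pX n i (Dmix n I φ) p)]
  | succ k =>
    obtain ⟨a, ha⟩ := (hφ.Dmix I).time_eqn k
    have hsol := (hφ.Dmix I).smooth
    have hlap : ∀ i ∈ Finset.univ, Ctl n φ ((∑ i, I i) + (k + 1))
        (fun p => Real.exp (-p.1) * pX n i (pX n i ((pT n)^[k] (Dmix n I φ))) p) := by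
      intro i _
      obtain ⟨C, hC, hb⟩ := sq_pX_le_of_ctl hφ
        (fun j hj => ih j (hj.trans (Nat.lt_succ_self k))) (I + Pi.single i 1) i
      refine ⟨C, hC, fun p hp => ?_⟩
      have h := hb p hp
      rw [sum_add_single, ← pX_Dmix hφ.smooth, ← pX_pT_iterate_comm hsol,
        show (∑ i, I i) + 1 + k = (∑ i, I i) + (k + 1) by ring] at h
      refine le_trans ?_ h
      have hee : Real.exp p.1 * Real.exp (-p.1) = 1 := by rw [← Real.exp_add]; simp
      have hle : Real.exp (-p.1) ≤ 1 := Real.exp_le_one_iff.2 (by linarith)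
      calc _ = (Real.exp p.1 * Real.exp (-p.1)) * Real.exp (-p.1)
            * pX n i (pX n i ((pT n)^[k] (Dmix n I φ))) p ^ 2 := by ring
        _ ≤ _ := by
          rw [hee, one_mul]
          exact mul_le_of_le_one_left (sq_nonneg _) hle
    have hlow : ∀ j ∈ Finset.range (k + 1), Ctl n φ ((∑ i, I i) + (k + 1))
        (fun p => a j * (pT n)^[j + 1] (Dmix n I φ) p) := fun j hj =>
      ((ih j (Finset.mem_range.1 hj) I).mono (by
        have := Finset.mem_range.1 hj; lia)).const_mul (a j)
    refine ((Ctl.sum hlap).add ((Ctl.sum hlow).const_mul (-1))).congr fun p hp => ?_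
    have h := ha p hp
    have hee : Real.exp (-p.1) * Real.exp p.1 = 1 := by rw [← Real.exp_add]; simp
    rw [← Finset.mul_sum]
    rw [show k + 1 + 1 = k + 2 by ring]
    linear_combination Real.exp (-p.1) * h
      - ((pT n)^[k + 2] (_root_.Dmix n I φ) p
        + ∑ j ∈ Finset.range (k + 1), a j * (pT n)^[j + 1] (_root_.Dmix n I φ) p) * hee

/-- Pointwise reduction of the time-differentiated energies to the purely spatial ones. -/
lemma dens_pT_iterate_le (hφ : IsSol n φ) (I : Fin n → ℕ) (k : ℕ) :
    ∃ C : ℝ, 0 ≤ C ∧ ∀ p : ℝ × (Fin n → ℝ), 0 ≤ p.1 →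
      dens n ((pT n)^[k] (Dmix n I φ)) p ≤ C * densSum n φ ((∑ i, I i) + k) p := by
  obtain ⟨C, hC, hb⟩ := ctl_pT_iterate hφ k I
  choose D hD hd using sq_pX_le_of_ctl hφ (k := k) (fun j _ => ctl_pT_iterate hφ j) I
  refine ⟨C + ∑ i, D i, add_nonneg hC (Finset.sum_nonneg fun i _ => hD i), fun p hp => ?_⟩
  rw [add_mul, Finset.sum_mul]
  simp only [dens, ← Function.iterate_succ_apply' (pT n)]
  exact add_le_add (hb p hp) (Finset.sum_le_sum fun i _ => hd i p hp)

end Control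

/-! ### From densities to the weighted energies -/

section Final

variable {n : ℕ} {φ : ℝ × (Fin n → ℝ) → ℝ}

lemma fEn_eq (hφ : ContDiff ℝ (⊤ : ℕ∞) φ) (hs : LocSupp n {0} φ) (I : Fin n → ℕ) (k : ℕ)
    {t : ℝ} (ht : 0 ≤ t) :
    fEn n φ I k t = 1 / 2 * ∫ x, dens n ((pT n)^[k] (Dmix n I φ)) (t, x) := by
  have hD : ContDiff ℝ (⊤ : ℕ∞) (Dmix n I φ) :=
    Dmix_induction (P := fun g => ContDiff ℝ (⊤ : ℕ∞) g) (fun _ i h => contDiff_pX h i) hφ I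
  have hv := contDiff_pT_iterate hD k
  have hvs : LocSupp n {0} ((pT n)^[k] (Dmix n I φ)) :=
    (Dmix_induction (P := LocSupp n {0}) (fun _ i h => h.pX i) hs I).pT_iterate hD k
  unfold fEn En0 En1
  generalize (pT n)^[k] (Dmix n I φ) = v at hv hvs
  have hT := contDiff_pT hv
  have hX := fun i => contDiff_pX hv i
  have h1 : Integrable fun x => pT n v (t, x) ^ 2 := by
    simp only [pow_two]
    exact ((hvs.pT hv).mul_right (h := pT n v)).integrable (hT.continuous.mul hT.continuous)
      rfl ht
  have h2 : Integrable fun x => ∑ i, pX n i v (t, x) ^ 2 := by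
    refine integrable_finsetSum _ fun i _ => ?_
    simp only [pow_two]
    exact ((hvs.pX i).mul_right (h := pX n i v)).integrable
      ((hX i).continuous.mul (hX i).continuous) rfl ht
  simp only [dens]
  rw [integral_add (h1.const_mul _) h2, integral_const_mul, integral_mul_const,
    integral_mul_const, integral_const_mul]
  have e1 : Real.exp ((2 - (n : ℝ)) * t / 2) * Real.exp ((n : ℝ) * t / 2) = Real.exp t := by
    rw [← Real.exp_add]; ring_nf
  have e2 : Real.exp t * Real.exp (-t) = 1 := by rw [← Real.exp_add]; simp
  linear_combination (1 / 2 * (∫ x, pT n v (t, x) ^ 2)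
      + 1 / 2 * Real.exp (-t) * ∫ x, ∑ i, pX n i v (t, x) ^ 2) * e1
    + (1 / 2 * ∫ x, ∑ i, pX n i v (t, x) ^ 2) * e2

lemma fEn_nonneg (I : Fin n → ℕ) (k : ℕ) (t : ℝ) : 0 ≤ fEn n φ I k t := by
  unfold fEn En0 En1
  refine mul_nonneg (Real.exp_pos _).le (add_nonneg ?_ ?_) <;>
  · refine mul_nonneg (by norm_num) (integral_nonneg fun x => ?_)
    simp only [Pi.zero_apply]
    positivity

/-- The bounding sum contains, as its `k = 0` part, all purely spatial energies. -/
lemma sum_idx_fEn_le (m k₀ : ℕ) : ∑ l ∈ idx n m, fEn n φ l 0 0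
    ≤ ∑ k ∈ Finset.range (k₀ + 1),
        ∑ l ∈ (Fintype.piFinset fun _ : Fin n => Finset.range (m + 1)).filter
            (fun l => (∑ i : Fin n, l i) + k ≤ m), fEn n φ l k 0 := by
  rw [Finset.sum_range_succ']
  simp only [add_zero, idx]
  refine le_add_of_nonneg_left (Finset.sum_nonneg fun k _ => Finset.sum_nonneg fun l _ => ?_)
  exact fEn_nonneg l _ 0

lemma isSol_of_dBox (hφ : ContDiff ℝ (⊤ : ℕ∞) φ)
    (heq : ∀ p : ℝ × (Fin n → ℝ), 0 ≤ p.1 → dBox n φ p - pT n φ p = 0) : IsSol n φ := by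
  refine ⟨hφ, fun p hp => ?_⟩
  have h := heq p hp
  have hee : Real.exp p.1 * Real.exp (-p.1) = 1 := by rw [← Real.exp_add]; simp
  simp only [dBox] at h
  linear_combination (-Real.exp p.1) * h + (∑ i, pX n i (pX n i φ) p) * hee

end Final

/-- Uniform bound on higher-order weighted energies: for a compactly supported smooth
solution of `□_gφ - φₜ = 0`, `f^{I,I₀}(t) ≤ C Σ_{k≤I₀} Σ_{|l|+k ≤ |I|+I₀} f^{l,k}(0)`. -/
theorem stmt8 (n : ℕ) (hn : 1 ≤ n) (φ : ℝ × (Fin n → ℝ) → ℝ) (hφ : ContDiff ℝ (⊤ : ℕ∞) φ)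
    (hsupp : ∀ t : ℝ, 0 ≤ t → HasCompactSupport fun x => φ (t, x))
    (heq : ∀ p : ℝ × (Fin n → ℝ), 0 ≤ p.1 → dBox n φ p - pT n φ p = 0)
    (I : Fin n → ℕ) (I0 : ℕ) :
    ∃ C : ℝ, 0 < C ∧ ∀ t : ℝ, 0 ≤ t →
      fEn n φ I I0 t ≤ C *
        ∑ k ∈ Finset.range (I0 + 1),
          ∑ l ∈ (Fintype.piFinset fun _ : Fin n =>
                Finset.range ((∑ i : Fin n, I i) + I0 + 1)).filter
              (fun l => (∑ i : Fin n, l i) + k ≤ (∑ i : Fin n, I i) + I0),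
            fEn n φ l k 0 := by
  have hsol := isSol_of_dBox hφ heq
  have hls := locSupp_of_hasCompactSupport hsol hsupp
  have hDs : ∀ l, LocSupp n {0} (Dmix n l φ) := fun l =>
    Dmix_induction (P := LocSupp n {0}) (fun _ i h => h.pX i) hls l
  obtain ⟨C, hC, hb⟩ := dens_pT_iterate_le hsol I I0
  refine ⟨C + 1, by positivity, fun t ht => ?_⟩
  have hspatial := sum_idx_fEn_le (φ := φ) ((∑ i : Fin n, I i) + I0) I0
  generalize (∑ i : Fin n, I i) + I0 = m at hspatial hb ⊢
  have hint : ∀ l, Integrable fun x => dens n (Dmix n l φ) (t, x) := fun l =>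
    ((hDs l).dens (hsol.Dmix l).smooth).integrable (contDiff_dens (hsol.Dmix l).smooth).continuous
      rfl ht
  have hv := contDiff_pT_iterate (hsol.Dmix I).smooth I0
  have hvs := (hDs I).pT_iterate (hsol.Dmix I).smooth I0
  have hreduce : fEn n φ I I0 t ≤ C * ∑ l ∈ idx n m, fEn n φ l 0 t := by
    have h1 : ∫ x, dens n ((pT n)^[I0] (Dmix n I φ)) (t, x)
        ≤ ∫ x, C * densSum n φ m (t, x) :=
      integral_mono ((hvs.dens hv).integrable (contDiff_dens hv).continuous rfl ht)
        ((integrable_finsetSum _ fun l _ => hint l).const_mul C) fun x => hb (t, x) ht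
    simp only [densSum] at h1
    rw [integral_const_mul, integral_finsetSum _ fun l _ => hint l] at h1
    simp only [fEn_eq hφ hls _ _ ht, Function.iterate_zero, id, ← Finset.mul_sum]
    linarith
  have hmono : ∀ l, fEn n φ l 0 t ≤ fEn n φ l 0 0 := fun l => by
    rw [fEn_eq hφ hls _ _ ht, fEn_eq hφ hls _ _ le_rfl]
    exact mul_le_mul_of_nonneg_left (integral_dens_le (hsol.Dmix l) (hDs l) ht) (by norm_num)
  have hpos : 0 ≤ ∑ l ∈ idx n m, fEn n φ l 0 0 := Finset.sum_nonneg fun l _ => fEn_nonneg l 0 0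
  calc fEn n φ I I0 t ≤ C * ∑ l ∈ idx n m, fEn n φ l 0 t := hreduce
    _ ≤ C * ∑ l ∈ idx n m, fEn n φ l 0 0 :=
        mul_le_mul_of_nonneg_left (Finset.sum_le_sum fun l _ => hmono l) hC
    _ ≤ (C + 1) * ∑ l ∈ idx n m, fEn n φ l 0 0 := by linarith
    _ ≤ _ := mul_le_mul_of_nonneg_left hspatial (by positivity)
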